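/- arXiv:cs/0210027 — 2 statements merged into one kernel-verified Lean document; each statement's English description precedes it below -/
import Mathlib

section
/- Let P be a propositional normal logic program, I a model of P, and l an I-partial level mapping such that P satisfies (WF) with respect to I and l. Then for every A ∈ dom(l) with l(A) = α: if A ∈ I then A ∈ W_P↑(α+1), and if ¬A ∈ I then ¬A ∈ W_P↑(α+1). In particular, for each ordinal α the set U of all atoms B with l(B) = α and ¬B ∈ I is an unfounded set of P with respect to W_P↑α. -/
namespace LP

/-- A literal over a set of propositional atoms: an atom or a negated atom. -/
inductive Lit (atom : Type) where
  | pos : atom → Lit atom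
  | neg : atom → Lit atom

/-- The underlying atom of a literal. -/
def Lit.atomOf {atom : Type} : Lit atom → atom
  | .pos a => a
  | .neg a => a

/-- A clause `head ← pos₁,…,posₙ, ¬neg₁,…,¬negₘ`. -/
structure Clause (atom : Type) where
  head : atom
  pos : Finset atom
  neg : Finset atom

variable {atom : Type}

/-- A (propositional) normal logic program: a set of clauses. -/
abbrev Program (atom : Type) := Set (Clause atom)

/-- Partial interpretations: sets of literals. -/
abbrev Interp (atom : Type) := Set (Lit atom)

def Consistent (I : Interp atom) : Prop := ∀ a : atom, ¬ (Lit.pos a ∈ I ∧ Lit.neg a ∈ I)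

def Total (I : Interp atom) : Prop := ∀ a : atom, Lit.pos a ∈ I ∨ Lit.neg a ∈ I

/-- An atom is defined (true or false, i.e. not undefined) in `I`. -/
def Defined (I : Interp atom) (A : atom) : Prop := Lit.pos A ∈ I ∨ Lit.neg A ∈ I

/-- Every body literal of the clause is true in `I`. -/
def BodyTrue (I : Interp atom) (C : Clause atom) : Prop :=
  (∀ a ∈ C.pos, Lit.pos a ∈ I) ∧ (∀ b ∈ C.neg, Lit.neg b ∈ I)

/-- Some body literal of the clause is false in `I`. -/
def BodyFalse (I : Interp atom) (C : Clause atom) : Prop :=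
  (∃ a ∈ C.pos, Lit.neg a ∈ I) ∨ (∃ b ∈ C.neg, Lit.pos b ∈ I)

/-- Three-valued model. -/
def Model3 (P : Program atom) (I : Interp atom) : Prop :=
  Consistent I ∧ ∀ C ∈ P,
    (BodyTrue I C → Lit.pos C.head ∈ I) ∧ (¬ BodyFalse I C → Lit.neg C.head ∉ I)

/-- Two-valued model. -/
def Model2 (P : Program atom) (M : Set atom) : Prop :=
  ∀ C ∈ P, (∀ a ∈ C.pos, a ∈ M) → (∀ b ∈ C.neg, b ∉ M) → C.head ∈ M

/-- A program is definite if no clause has negative body literals. -/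
def Definite (P : Program atom) : Prop := ∀ C ∈ P, C.neg = ∅

/-- The one-step operator `T_P⁺` for definite programs. -/
def Tplus (P : Program atom) (M : Set atom) : Set atom :=
  {A | ∃ C ∈ P, C.head = A ∧ C.neg = ∅ ∧ ∀ a ∈ C.pos, a ∈ M}

def TplusIter (P : Program atom) : ℕ → Set atom
  | 0 => ∅
  | n + 1 => Tplus P (TplusIter P n)

/-- `T_P⁺ ↑ ω`, the least two-valued model of a definite program. -/
def TplusOmega (P : Program atom) : Set atom := ⋃ n, TplusIter P n

/-- The Gelfond–Lifschitz reduct `P/M`. -/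
def GLreduct (P : Program atom) (M : Set atom) : Program atom :=
  {C' | ∃ C ∈ P, (∀ b ∈ C.neg, b ∉ M) ∧ C' = ⟨C.head, C.pos, ∅⟩}

/-- The Gelfond–Lifschitz operator. -/
def GLop (P : Program atom) (M : Set atom) : Set atom := TplusOmega (GLreduct P M)

/-- Stable model. -/
def Stable (P : Program atom) (M : Set atom) : Prop := GLop P M = M

def posLits (S : Set atom) : Interp atom := Lit.pos '' S
def negLits (S : Set atom) : Interp atom := Lit.neg '' S

/-- Three-valued immediate-consequence operator `T_P`. -/
def TP (P : Program atom) (I : Interp atom) : Set atom :=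
  {A | ∃ C ∈ P, C.head = A ∧ BodyTrue I C}

/-- `F_P`: atoms all of whose clauses have false bodies. -/
def FP (P : Program atom) (I : Interp atom) : Set atom :=
  {A | ∀ C ∈ P, C.head = A → BodyFalse I C}

/-- Fitting's operator `Φ_P`. -/
def Phi (P : Program atom) (I : Interp atom) : Interp atom :=
  posLits (TP P I) ∪ negLits (FP P I)

/-- Knaster–Tarski least (pre-)fixed point of an operator on sets. -/
def lfpSet {L : Type*} (F : Set L → Set L) : Set L := ⋂₀ {I | F I ⊆ I}

/-- Knaster–Tarski greatest (post-)fixed point of an operator on sets. -/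
def gfpSet {L : Type*} (F : Set L → Set L) : Set L := ⋃₀ {I | I ⊆ F I}

/-- The Fitting (Kripke–Kleene) model: least fixed point of `Φ_P`. -/
def FittingModel (P : Program atom) : Interp atom := lfpSet (Phi P)

/-- Transfinite iteration `F ↑ α` of an operator starting from `∅`. -/
noncomputable def iterOrd {L : Type*} (F : Set L → Set L) (α : Ordinal.{0}) : Set L :=
  Ordinal.limitRecOn α ∅ (fun _ ih => F ih) (fun o _ ih => ⋃ β, ⋃ h : β < o, ih β h)

/-- `U` is an unfounded set of `P` with respect to `I`. -/
def Unfounded (P : Program atom) (I : Interp atom) (U : Set atom) : Prop :=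
  ∀ A ∈ U, ∀ C ∈ P, C.head = A → BodyFalse I C ∨ ∃ a ∈ C.pos, a ∈ U

/-- The greatest unfounded set of `P` with respect to `I`. -/
def UP (P : Program atom) (I : Interp atom) : Set atom := ⋃₀ {U | Unfounded P I U}

/-- The van Gelder–Ross–Schlipf operator `W_P`. -/
def WP (P : Program atom) (I : Interp atom) : Interp atom :=
  posLits (TP P I) ∪ negLits (UP P I)

/-- The well-founded model: least fixed point of `W_P`. -/
def WFModel (P : Program atom) : Interp atom := lfpSet (WP P)

/-- `P` satisfies (F) with respect to `I` and the level mapping `l`. -/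
def CondF (P : Program atom) (I : Interp atom) (l : atom → Ordinal.{0}) : Prop :=
  ∀ A : atom, Defined I A →
    (Lit.pos A ∈ I ∧ ∃ C ∈ P, C.head = A ∧
        (∀ a ∈ C.pos, Lit.pos a ∈ I ∧ l a < l A) ∧
        (∀ b ∈ C.neg, Lit.neg b ∈ I ∧ l b < l A)) ∨
    (Lit.neg A ∈ I ∧ ∀ C ∈ P, C.head = A →
        (∃ a ∈ C.pos, Lit.neg a ∈ I ∧ l a < l A) ∨
        (∃ b ∈ C.neg, Lit.pos b ∈ I ∧ l b < l A))

/-- `P` satisfies (WF) with respect to `I` and the level mapping `l`. -/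
def CondWF (P : Program atom) (I : Interp atom) (l : atom → Ordinal.{0}) : Prop :=
  ∀ A : atom, Defined I A →
    (Lit.pos A ∈ I ∧ ∃ C ∈ P, C.head = A ∧
        (∀ a ∈ C.pos, Lit.pos a ∈ I ∧ l a < l A) ∧
        (∀ b ∈ C.neg, Lit.neg b ∈ I ∧ l b < l A)) ∨
    (Lit.neg A ∈ I ∧ ∀ C ∈ P, C.head = A →
        (∃ a ∈ C.pos, Lit.neg a ∈ I ∧ l a ≤ l A) ∨
        (∃ b ∈ C.neg, Lit.pos b ∈ I ∧ l b < l A))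

/-- `P` satisfies (WS) with respect to `I` and the level mapping `l`. -/
def CondWS (P : Program atom) (I : Interp atom) (l : atom → Ordinal.{0}) : Prop :=
  ∀ A : atom, Defined I A →
    (Lit.pos A ∈ I ∧ ∃ C ∈ P, C.head = A ∧
        (∀ a ∈ C.pos, Lit.pos a ∈ I ∧ l a < l A) ∧
        (∀ b ∈ C.neg, Lit.neg b ∈ I ∧ l b < l A)) ∨
    (Lit.neg A ∈ I ∧ ∀ C ∈ P, C.head = A →
        (∃ a ∈ C.pos, Lit.neg a ∈ I ∧ l a < l A) ∨
        ((∀ a ∈ C.pos, l a ≤ l A) ∧ (∀ b ∈ C.neg, l b < l A) ∧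
            ∃ a ∈ C.pos, Lit.neg a ∈ I) ∨
        (∃ b ∈ C.neg, Lit.pos b ∈ I ∧ l b < l A))

/-- `A` refers to `B`. -/
def RefersTo (P : Program atom) (A B : atom) : Prop :=
  ∃ C ∈ P, C.head = A ∧ (B ∈ C.pos ∨ B ∈ C.neg)

/-- `A` refers negatively to `B`. -/
def RefersNeg (P : Program atom) (A B : atom) : Prop :=
  ∃ C ∈ P, C.head = A ∧ B ∈ C.neg

/-- `DepOn P A B`: `A` depends on `B`, i.e. `B ≤ A`. -/
def DepOn (P : Program atom) : atom → atom → Prop := Relation.TransGen (RefersTo P)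

/-- `DepNeg P B A`: `B < A`, i.e. `A` depends negatively on `B`. -/
def DepNeg (P : Program atom) (B A : atom) : Prop :=
  ∃ C D, RefersNeg P C D ∧ (DepOn P A C ∨ C = A) ∧ (DepOn P D B ∨ B = D)

/-- `A ~ B`. -/
def Sim (P : Program atom) (A B : atom) : Prop :=
  A = B ∨ (DepNeg P A B ∧ DepNeg P B A)

/-- The components of `P`: equivalence classes of `~`. -/
def IsComponent (P : Program atom) (C : Set atom) : Prop :=
  ∃ A : atom, C = {B | Sim P A B}

/-- A trivial component: a singleton `{A}` with `A ≮ A`. -/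
def TrivialComponent (P : Program atom) (C : Set atom) : Prop :=
  ∃ A : atom, C = {A} ∧ ¬ DepNeg P A A

/-- The ordering `≺` on components. -/
def CompLt (P : Program atom) (C₁ C₂ : Set atom) : Prop :=
  C₁ ≠ C₂ ∧ ∀ A₁ ∈ C₁, ∃ A₂ ∈ C₂, DepNeg P A₁ A₂

def MinimalComponent (P : Program atom) (C : Set atom) : Prop :=
  IsComponent P C ∧ ¬ ∃ C₂, IsComponent P C₂ ∧ CompLt P C₂ C

/-- The bottom stratum `S(P)`: union of all minimal components. -/
def bottomStratum (P : Program atom) : Set atom :=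
  {A | ∃ C, MinimalComponent P C ∧ A ∈ C}

/-- The bottom layer `L(P)`: clauses with head in the bottom stratum. -/
def bottomLayer (P : Program atom) : Program atom :=
  {C ∈ P | C.head ∈ bottomStratum P}

/-- Delete from the body of `C` all literals true in `I`. -/
noncomputable def reduceClause (I : Interp atom) (C : Clause atom) : Clause atom :=
  letI : ∀ p : Prop, Decidable p := fun p => Classical.propDecidable p
  ⟨C.head, C.pos.filter (fun a => Lit.pos a ∉ I), C.neg.filter (fun b => Lit.neg b ∉ I)⟩

/-- Steps (1) and (2) of the reduct of `P` with respect to `I`. -/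
noncomputable def step12 (P : Program atom) (I : Interp atom) : Program atom :=
  {C' | ∃ C ∈ P, Lit.pos C.head ∉ I ∧ ¬ BodyFalse I C ∧ C' = reduceClause I C}

def IsUnitClause (C : Clause atom) : Prop := C.pos = ∅ ∧ C.neg = ∅

/-- The reduct `P/I` of Przymusinska–Przymusinski (steps (1)–(3)). -/
noncomputable def reduct (P : Program atom) (I : Interp atom) : Program atom :=
  {C ∈ step12 P I | IsUnitClause C ∨ ¬ ∃ C' ∈ step12 P I, C'.head = C.head ∧ IsUnitClause C'}

/-- The atoms occurring in `P`. -/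
def atomsOf (P : Program atom) : Set atom :=
  {A | ∃ C ∈ P, A = C.head ∨ A ∈ C.pos ∨ A ∈ C.neg}

/-- `R`: atoms undefined in `N` which are eliminated from `P` by reducing w.r.t. `N`. -/
noncomputable def Ratoms (P : Program atom) (N : Interp atom) : Set atom :=
  {A | A ∈ atomsOf P ∧ A ∉ atomsOf (reduct P N) ∧ ¬ Defined N A}

/-- The definite (partial) model of a definite program `Q`. -/
def defPartialModel (Q : Program atom) : Interp atom :=
  posLits (TplusOmega Q) ∪ negLits (atomsOf Q \ TplusOmega Q)

/-- The stopping condition of the weakly perfect model construction at `N`. -/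
noncomputable def stopCond (P : Program atom) (N : Interp atom) : Prop :=
  reduct P N = ∅ ∨ bottomStratum (reduct P N) = ∅ ∨
    ∃ C ∈ bottomLayer (reduct P N), C.neg ≠ ∅

/-- `M_α` computed from `N_α` (empty if the construction has stopped). -/
noncomputable def Mstep (P : Program atom) (N : Interp atom) : Interp atom :=
  letI : ∀ p : Prop, Decidable p := fun p => Classical.propDecidable p
  if stopCond P N then ∅
  else defPartialModel (bottomLayer (reduct P N)) ∪ negLits (Ratoms P N)

/-- `N_α = ⋃_{0<δ<α} M_δ` of the weakly perfect model construction. -/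
noncomputable def Nseq (P : Program atom) : Ordinal.{0} → Interp atom :=
  Ordinal.lt_wf.fix (C := fun _ => Interp atom)
    (fun α ih => ⋃ β : Ordinal.{0}, ⋃ h : β < α, Mstep P (ih β h))

/-- The stage at which the weakly perfect model construction stops. -/
noncomputable def wpStop (P : Program atom) : Ordinal.{0} :=
  sInf {α | stopCond P (Nseq P α)}

/-- The weakly perfect model `M_P = N_α ∪ ¬R_α` at the stopping stage `α`. -/
noncomputable def weaklyPerfectModel (P : Program atom) : Interp atom :=
  Nseq P (wpStop P) ∪ negLits (Ratoms P (Nseq P (wpStop P)))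

/-- Clause subsumption `C₁ ≼ C₂`. -/
def ClauseSub (C₁ C₂ : Clause atom) : Prop :=
  C₁.head = C₂.head ∧ C₁.pos ⊆ C₂.pos ∧ C₁.neg ⊆ C₂.neg

/-- `P'` subsumes `Q` model-consistently with respect to `I`: `P' ≼_I Q`. -/
def SubsumesMC (P' Q : Program atom) (I : Interp atom) : Prop :=
  (∀ C₁ ∈ P', ∃ C₂ ∈ Q, ClauseSub C₁ C₂ ∧
      (∀ a ∈ C₂.pos, a ∉ C₁.pos → Lit.pos a ∈ I) ∧
      (∀ b ∈ C₂.neg, b ∉ C₁.neg → Lit.neg b ∈ I)) ∧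
  (∀ C₂ ∈ Q, BodyTrue I C₂ → Lit.pos C₂.head ∉ I → ∃ C₁ ∈ P', ClauseSub C₁ C₂)

/-!
By transfinite induction on `α`, every literal of `I` of level below `α` lies in `W_P ↑ α`. At a
successor step, the clause given by (WFi) derives a true atom from literals of lower level, while
the false atoms of one fixed level form an unfounded set: by (WFii) each of their clauses is either
falsified by a literal of lower level or contains a positive atom of the same set. At a limit `α`, a
literal of level `β < α` already lies in `W_P ↑ (β + 1)`.
-/

section Iteration

variable {L : Type*} (F : Set L → Set L)

theorem iterOrd_add_one (α : Ordinal.{0}) : iterOrd F (α + 1) = F (iterOrd F α) :=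
  Ordinal.limitRecOn_add_one _ _ _ _

theorem iterOrd_of_isSuccLimit {α : Ordinal.{0}} (hα : Order.IsSuccLimit α) :
    iterOrd F α = ⋃ β, ⋃ _ : β < α, iterOrd F β :=
  Ordinal.limitRecOn_limit _ _ _ _ hα

theorem iterOrd_subset_of_isSuccLimit {α β : Ordinal.{0}} (hα : Order.IsSuccLimit α)
    (hβ : β < α) : iterOrd F β ⊆ iterOrd F α := by
  rw [iterOrd_of_isSuccLimit F hα]
  exact Set.subset_biUnion_of_mem (u := fun γ => iterOrd F γ) hβ

end Iteration

section WellFoundedOperator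

variable {P : Program atom} {I J : Interp atom} {C : Clause atom} {A : atom} {U : Set atom}

theorem BodyTrue.mono (h : BodyTrue I C) (hIJ : I ⊆ J) : BodyTrue J C :=
  ⟨fun a ha => hIJ (h.1 a ha), fun b hb => hIJ (h.2 b hb)⟩

theorem BodyFalse.mono (h : BodyFalse I C) (hIJ : I ⊆ J) : BodyFalse J C :=
  h.imp (fun ⟨a, ha, haI⟩ => ⟨a, ha, hIJ haI⟩) (fun ⟨b, hb, hbI⟩ => ⟨b, hb, hIJ hbI⟩)

theorem pos_mem_WP_of_mem_TP (hA : A ∈ TP P J) : Lit.pos A ∈ WP P J :=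
  Or.inl (Set.mem_image_of_mem _ hA)

theorem Unfounded.neg_mem_WP (hU : Unfounded P J U) (hA : A ∈ U) : Lit.neg A ∈ WP P J :=
  Or.inr (Set.mem_image_of_mem _ (Set.mem_sUnion_of_mem hA hU))

end WellFoundedOperator

/-- The literals of `I` whose level under `l` is strictly less than `α`. This is the invariant of
the transfinite induction: it is contained in `W_P ↑ α`. -/
def litsBelow (I : Interp atom) (l : atom → Ordinal.{0}) (α : Ordinal.{0}) : Interp atom :=
  {L ∈ I | l L.atomOf < α}

theorem litsBelow_mono (I : Interp atom) (l : atom → Ordinal.{0}) : Monotone (litsBelow I l) :=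
  fun _ _ hαβ _ hL => ⟨hL.1, hL.2.trans_le hαβ⟩

section LevelMapping

variable {P : Program atom} {I J : Interp atom} {l : atom → Ordinal.{0}} {A : atom}
  {α : Ordinal.{0}}

theorem CondWF.exists_clause_bodyTrue_litsBelow (hWF : CondWF P I l) (hI : Consistent I)
    (hA : Lit.pos A ∈ I) : ∃ C ∈ P, C.head = A ∧ BodyTrue (litsBelow I l (l A)) C := by
  rcases hWF A (Or.inl hA) with ⟨-, hClause⟩ | ⟨hneg, -⟩
  · exact hClause
  · exact absurd ⟨hA, hneg⟩ (hI A)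

theorem CondWF.bodyFalse_litsBelow_or_exists_pos (hWF : CondWF P I l) (hI : Consistent I)
    {C : Clause atom} (hC : C ∈ P) (hhead : Lit.neg C.head ∈ I) :
    BodyFalse (litsBelow I l (l C.head)) C ∨ ∃ a ∈ C.pos, l a = l C.head ∧ Lit.neg a ∈ I := by
  rcases hWF C.head (Or.inr hhead) with ⟨hpos, -⟩ | ⟨-, hClauses⟩
  · exact absurd ⟨hpos, hhead⟩ (hI C.head)
  rcases hClauses C hC rfl with ⟨a, haC, haI, hle⟩ | ⟨b, hbC, hbI, hlt⟩
  · rcases hle.lt_or_eq with hlt | heq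
    · exact Or.inl (Or.inl ⟨a, haC, haI, hlt⟩)
    · exact Or.inr ⟨a, haC, heq, haI⟩
  · exact Or.inl (Or.inr ⟨b, hbC, hbI, hlt⟩)

theorem CondWF.mem_TP (hWF : CondWF P I l) (hI : Consistent I) (hA : Lit.pos A ∈ I)
    (hJ : litsBelow I l (l A) ⊆ J) : A ∈ TP P J := by
  obtain ⟨C, hC, hhead, hbody⟩ := hWF.exists_clause_bodyTrue_litsBelow hI hA
  exact ⟨C, hC, hhead, hbody.mono hJ⟩

theorem CondWF.unfounded_setOf_level_eq (hWF : CondWF P I l) (hI : Consistent I)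
    (hJ : litsBelow I l α ⊆ J) : Unfounded P J {B | l B = α ∧ Lit.neg B ∈ I} := by
  rintro _ ⟨rfl, hA⟩ C hC rfl
  exact (hWF.bodyFalse_litsBelow_or_exists_pos hI hC hA).imp_left (·.mono hJ)

theorem CondWF.mem_WP (hWF : CondWF P I l) (hI : Consistent I) {L : Lit atom} (hL : L ∈ I)
    (hJ : litsBelow I l (l L.atomOf) ⊆ J) : L ∈ WP P J := by
  cases L with
  | pos A => exact pos_mem_WP_of_mem_TP (hWF.mem_TP hI hL hJ)
  | neg A => exact (hWF.unfounded_setOf_level_eq hI hJ).neg_mem_WP ⟨rfl, hL⟩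

theorem CondWF.litsBelow_add_one_subset_WP (hWF : CondWF P I l) (hI : Consistent I)
    (hJ : litsBelow I l α ⊆ J) : litsBelow I l (α + 1) ⊆ WP P J :=
  fun _ ⟨hL, hlt⟩ =>
    hWF.mem_WP hI hL ((litsBelow_mono I l (Order.lt_add_one_iff.mp hlt)).trans hJ)

theorem CondWF.litsBelow_subset_iterOrd (hWF : CondWF P I l) (hI : Consistent I)
    (α : Ordinal.{0}) : litsBelow I l α ⊆ iterOrd (WP P) α := by
  induction α using Ordinal.limitRecOn with
  | zero => exact fun _ hL => absurd hL.2 not_lt_zero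
  | add_one α ih =>
    rw [iterOrd_add_one]
    exact hWF.litsBelow_add_one_subset_WP hI ih
  | limit α hα ih =>
    rintro L ⟨hL, hlt⟩
    have hsucc : l L.atomOf + 1 < α := hα.add_one_lt hlt
    exact iterOrd_subset_of_isSuccLimit (WP P) hα hsucc (ih _ hsucc ⟨hL, lt_add_one _⟩)

theorem CondWF.mem_iterOrd (hWF : CondWF P I l) (hI : Consistent I) {L : Lit atom}
    (hL : L ∈ I) : L ∈ iterOrd (WP P) (l L.atomOf + 1) :=
  hWF.litsBelow_subset_iterOrd hI _ ⟨hL, lt_add_one _⟩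

end LevelMapping

theorem condWF_implies_in_iterate_general (P : Program atom) (I : Interp atom)
    (l : atom → Ordinal.{0}) (hI : Consistent I) (hWF : CondWF P I l) :
    (∀ A : atom,
      (Lit.pos A ∈ I → Lit.pos A ∈ iterOrd (WP P) (l A + 1)) ∧
      (Lit.neg A ∈ I → Lit.neg A ∈ iterOrd (WP P) (l A + 1))) ∧
    ∀ α : Ordinal.{0},
      Unfounded P (iterOrd (WP P) α) {B : atom | l B = α ∧ Lit.neg B ∈ I} :=
  ⟨fun _ => ⟨hWF.mem_iterOrd hI, hWF.mem_iterOrd hI⟩,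
    fun α => hWF.unfounded_setOf_level_eq hI (hWF.litsBelow_subset_iterOrd hI α)⟩

/-- if `P` satisfies (WF) w.r.t. a model `I` and level mapping `l`, then
every literal of `I` appears in `W_P↑(l(A)+1)`; in particular, for each ordinal `α`
the set of atoms `B` with `l(B)=α` false in `I` is unfounded w.r.t. `W_P↑α`. -/
theorem condWF_implies_in_iterate {atom : Type} [Countable atom] (P : Program atom)
    (I : Interp atom) (l : atom → Ordinal.{0}) (hI : Model3 P I) (hWF : CondWF P I l) :
    (∀ A : atom,
      (Lit.pos A ∈ I → Lit.pos A ∈ iterOrd (WP P) (l A + 1)) ∧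
      (Lit.neg A ∈ I → Lit.neg A ∈ iterOrd (WP P) (l A + 1))) ∧
    ∀ α : Ordinal.{0},
      Unfounded P (iterOrd (WP P) α) {B : atom | l B = α ∧ Lit.neg B ∈ I} :=
  condWF_implies_in_iterate_general P I l hI.1 hWF

end LP
end

section
/- Let P be a propositional normal logic program, let L_P be the least fixed point and G_P the greatest fixed point of the monotone operator GL_P² on subsets of B_P. Then M = L_P ∪ ¬(B_P ∖ G_P) is the well-founded model of P. -/
namespace LP

variable {atom : Type}

/-!
Let `T` and `F` be the sets of true and false atoms of an interpretation `I` with `W_P(I) ⊆ I`. The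
complement of `GL_P(T)` is unfounded with respect to `I`, so it lies in `F`, and then `T` is closed
under the clauses of the reduct `P / GL_P(T)`; hence `GL_P²(T) ⊆ T` and `L_P ⊆ T`. Being antitone,
`GL_P` interchanges `L_P` and `G_P`, so `B_P ∖ G_P = B_P ∖ GL_P(L_P) ⊆ B_P ∖ GL_P(T) ⊆ F`.
Conversely, induction along the derivations in `GL_P(L_P) = G_P` shows that no atom of `G_P` lies in
an unfounded set with respect to `M = L_P ∪ ¬(B_P ∖ G_P)`, whence `W_P(M) ⊆ M`.
-/

section FixedPoints

variable {α : Type*} {F : Set α → Set α}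

theorem lfpSet_subset {X : Set α} (hX : F X ⊆ X) : lfpSet F ⊆ X :=
  Set.sInter_subset_of_mem hX

theorem subset_lfpSet {X : Set α} (h : ∀ Y, F Y ⊆ Y → X ⊆ Y) : X ⊆ lfpSet F :=
  Set.subset_sInter h

-- An antitone `F` is a monotone map into the order dual, in which least fixed points are the
-- greatest fixed points of the original order, so the rolling rule `map_lfp_comp` applies.
theorem map_lfpSet_of_antitone (hF : Antitone F) :
    F (lfpSet fun X => F (F X)) = gfpSet fun X => F (F X) :=
  OrderHom.map_lfp_comp (⟨OrderDual.toDual ∘ F, hF⟩ : Set α →o (Set α)ᵒᵈ)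
    ⟨F ∘ OrderDual.ofDual, fun _ _ h => hF h⟩

theorem map_gfpSet_of_antitone (hF : Antitone F) :
    F (gfpSet fun X => F (F X)) = lfpSet fun X => F (F X) :=
  OrderHom.map_gfp_comp (⟨OrderDual.toDual ∘ F, hF⟩ : Set α →o (Set α)ᵒᵈ)
    ⟨F ∘ OrderDual.ofDual, fun _ _ h => hF h⟩

end FixedPoints

section ImmediateConsequence

variable {Q : Program atom}

theorem Tplus_mono : Monotone (Tplus Q) := by
  rintro M N hMN _ ⟨C, hC, rfl, hneg, hpos⟩
  exact ⟨C, hC, rfl, hneg, fun a ha => hMN (hpos a ha)⟩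

theorem TplusIter_mono : Monotone (TplusIter Q) := by
  refine monotone_nat_of_le_succ fun n => ?_
  induction n with
  | zero => exact Set.empty_subset _
  | succ n ih => exact Tplus_mono ih

-- Bodies are finite, so all body atoms are derived at a common finite stage.
theorem Tplus_TplusOmega_subset : Tplus Q (TplusOmega Q) ⊆ TplusOmega Q := by
  rintro _ ⟨C, hC, rfl, hneg, hpos⟩
  obtain ⟨n, hn⟩ : ∃ n, (C.pos : Set atom) ⊆ TplusIter Q n :=
    TplusIter_mono.directed_le.exists_mem_subset_of_finset_subset_biUnion hpos
  exact Set.mem_iUnion.2 ⟨n + 1, C, hC, rfl, hneg, hn⟩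

theorem TplusOmega_subset {S : Set atom} (hS : Tplus Q S ⊆ S) : TplusOmega Q ⊆ S := by
  refine Set.iUnion_subset fun n => ?_
  induction n with
  | zero => exact Set.empty_subset _
  | succ n ih => exact (Tplus_mono ih).trans hS

end ImmediateConsequence

section GelfondLifschitz

variable {P : Program atom} {M S : Set atom}

theorem head_mem_GLop {C : Clause atom} (hC : C ∈ P) (hneg : ∀ b ∈ C.neg, b ∉ M)
    (hpos : ∀ a ∈ C.pos, a ∈ GLop P M) : C.head ∈ GLop P M :=
  Tplus_TplusOmega_subset ⟨_, ⟨C, hC, hneg, rfl⟩, rfl, rfl, hpos⟩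

theorem GLop_subset
    (hS : ∀ C ∈ P, (∀ b ∈ C.neg, b ∉ M) → (∀ a ∈ C.pos, a ∈ S) → C.head ∈ S) :
    GLop P M ⊆ S := by
  refine TplusOmega_subset ?_
  rintro _ ⟨_, ⟨C, hC, hneg, rfl⟩, rfl, -, hpos⟩
  exact hS C hC hneg hpos

theorem GLop_antitone (P : Program atom) : Antitone (GLop P) := fun _ _ hMN =>
  GLop_subset fun _ hC hneg hpos => head_mem_GLop hC (fun b hb hbM => hneg b hb (hMN hbM)) hpos

end GelfondLifschitz

section Interpretations

/-- The atoms that are true in a partial interpretation. -/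
def trueAtoms (I : Interp atom) : Set atom := Lit.pos ⁻¹' I

/-- The atoms that are false in a partial interpretation, which need not be the complement of
`trueAtoms I`, nor disjoint from it. -/
def falseAtoms (I : Interp atom) : Set atom := Lit.neg ⁻¹' I

variable {S U : Set atom}

theorem trueAtoms_posLits_union_negLits : trueAtoms (posLits S ∪ negLits U) = S := by
  ext a
  simp [trueAtoms, posLits, negLits]

theorem falseAtoms_posLits_union_negLits : falseAtoms (posLits S ∪ negLits U) = U := by
  ext a
  simp [falseAtoms, posLits, negLits]

theorem posLits_union_negLits_subset_iff {I : Interp atom} :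
    posLits S ∪ negLits U ⊆ I ↔ S ⊆ trueAtoms I ∧ U ⊆ falseAtoms I :=
  Set.union_subset_iff.trans (and_congr Set.image_subset_iff Set.image_subset_iff)

end Interpretations

section WellFounded

variable {P : Program atom} {I : Interp atom}

theorem unfounded_compl_GLop_trueAtoms : Unfounded P I (GLop P (trueAtoms I))ᶜ := by
  rintro _ hA C hC rfl
  by_contra! ⟨hbody, hpos⟩
  refine hA (head_mem_GLop hC (fun b hb hbI => hbody (Or.inr ⟨b, hb, hbI⟩)) fun a ha => ?_)
  exact Set.notMem_compl_iff.1 (hpos a ha)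

theorem Unfounded.disjoint_GLop_trueAtoms {U : Set atom} (hU : Unfounded P I U)
    (hI : Disjoint (falseAtoms I) (GLop P (trueAtoms I))) :
    Disjoint U (GLop P (trueAtoms I)) := by
  suffices h : GLop P (trueAtoms I) ⊆ GLop P (trueAtoms I) \ U from
    (Set.subset_sdiff.1 h).2.symm
  refine GLop_subset fun C hC hneg hpos => ⟨head_mem_GLop hC hneg fun a ha => (hpos a ha).1, ?_⟩
  intro hCU
  rcases hU _ hCU C hC rfl with (⟨a, ha, haI⟩ | ⟨b, hb, hbI⟩) | ⟨a, ha, haU⟩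
  · exact hI.notMem_of_mem_left haI (hpos a ha).1
  · exact hneg b hb hbI
  · exact (hpos a ha).2 haU

theorem UP_eq_compl_GLop_trueAtoms
    (hI : Disjoint (falseAtoms I) (GLop P (trueAtoms I))) :
    UP P I = (GLop P (trueAtoms I))ᶜ := by
  apply Set.Subset.antisymm
  · exact Set.sUnion_subset fun U hU => (hU.disjoint_GLop_trueAtoms hI).subset_compl_right
  · exact Set.subset_sUnion_of_mem unfounded_compl_GLop_trueAtoms

theorem GLop_subset_trueAtoms {M : Set atom} (hT : TP P I ⊆ trueAtoms I)
    (hM : Mᶜ ⊆ falseAtoms I) : GLop P M ⊆ trueAtoms I :=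
  GLop_subset fun C hC hneg hpos => hT ⟨C, hC, rfl, hpos, fun b hb => hM (hneg b hb)⟩

theorem TP_posLits_GLop_union_negLits_compl_subset {M : Set atom} :
    TP P (posLits (GLop P M) ∪ negLits Mᶜ) ⊆ GLop P M := by
  rintro _ ⟨C, hC, rfl, hpos, hneg⟩
  refine head_mem_GLop hC (fun b hb => ?_) fun a ha => ?_
  · exact falseAtoms_posLits_union_negLits.subset (hneg b hb)
  · exact trueAtoms_posLits_union_negLits.subset (hpos a ha)

theorem WFModel_subset_of_GLop_eq {T G : Set atom} (hT : GLop P T = G) (hG : GLop P G = T) :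
    WFModel P ⊆ posLits T ∪ negLits Gᶜ := by
  refine lfpSet_subset (posLits_union_negLits_subset_iff.2 ?_)
  have hU : UP P (posLits T ∪ negLits Gᶜ) = Gᶜ := by
    rw [UP_eq_compl_GLop_trueAtoms] <;>
      simp only [trueAtoms_posLits_union_negLits, falseAtoms_posLits_union_negLits, hT,
        disjoint_compl_left]
  rw [trueAtoms_posLits_union_negLits, falseAtoms_posLits_union_negLits, hU]
  refine ⟨?_, subset_rfl⟩
  rw [← hG]
  exact TP_posLits_GLop_union_negLits_compl_subset

theorem compl_GLop_trueAtoms_subset_falseAtoms (hI : WP P I ⊆ I) :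
    (GLop P (trueAtoms I))ᶜ ⊆ falseAtoms I :=
  (Set.subset_sUnion_of_mem unfounded_compl_GLop_trueAtoms).trans
    (posLits_union_negLits_subset_iff.1 hI).2

theorem lfpSet_GLop_GLop_subset_trueAtoms (hI : WP P I ⊆ I) :
    lfpSet (fun M => GLop P (GLop P M)) ⊆ trueAtoms I :=
  lfpSet_subset <| GLop_subset_trueAtoms (posLits_union_negLits_subset_iff.1 hI).1
    (compl_GLop_trueAtoms_subset_falseAtoms hI)

theorem alternating_fixpoint_char_general (P : Program atom) :
    posLits (lfpSet (fun M => GLop P (GLop P M))) ∪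
      negLits (Set.univ \ gfpSet (fun M => GLop P (GLop P M))) = WFModel P := by
  have hLG := map_lfpSet_of_antitone (GLop_antitone P)
  have hGL := map_gfpSet_of_antitone (GLop_antitone P)
  rw [← Set.compl_eq_univ_sdiff]
  refine (WFModel_subset_of_GLop_eq hLG hGL).antisymm' (subset_lfpSet fun I hI => ?_)
  have hL := lfpSet_GLop_GLop_subset_trueAtoms hI
  refine posLits_union_negLits_subset_iff.2 ⟨hL, ?_⟩
  calc (gfpSet fun M => GLop P (GLop P M))ᶜ
      = (GLop P (lfpSet fun M => GLop P (GLop P M)))ᶜ := by rw [hLG]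
    _ ⊆ (GLop P (trueAtoms I))ᶜ := Set.compl_subset_compl.2 (GLop_antitone P hL)
    _ ⊆ falseAtoms I := compl_GLop_trueAtoms_subset_falseAtoms hI

end WellFounded

/-- van Gelder: with `L_P` the least and `G_P` the greatest fixed point
of `GL_P²`, the interpretation `L_P ∪ ¬(B_P ∖ G_P)` is the well-founded model. -/
theorem alternating_fixpoint_char {atom : Type} [Countable atom] (P : Program atom) :
    posLits (lfpSet (fun M => GLop P (GLop P M))) ∪
      negLits (Set.univ \ gfpSet (fun M => GLop P (GLop P M))) = WFModel P :=
  alternating_fixpoint_char_general P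

end LP
end
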